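/- Let V be an orthogonal vector space of dimension n over an algebraically closed field of characteristic 0 and λ a partition. Then dim (S_λ V)^{O(V)} = 1 if λ = 2μ for some partition μ, and 0 otherwise. Similarly for a symplectic space W of dimension 2n, dim (S_λ W)^{Sp(W)} = 1 if λ = 2μ' (the conjugate of a partition 2μ, i.e., λ has even columns), and 0 otherwise. -/

import Mathlib

open scoped Classical

noncomputable section

variable (K V : Type*) [Field K] [AddCommGroup V] [Module K V]

/-- The d-th tensor power of V. -/
abbrev tpow (d : ℕ) := PiTensorProduct K (fun _ : Fin d => V)

/-- The action of a permutation of the factors on the tensor power. -/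
def permAction (d : ℕ) (σ : Equiv.Perm (Fin d)) : tpow K V d →ₗ[K] tpow K V d :=
  (PiTensorProduct.reindex K (fun _ : Fin d => V) σ).toLinearMap

/-- The Young symmetrizer e_T = Σ_{σ ∈ R_T, τ ∈ C_T} sgn(τ) σ τ of a tableau T of shape
lam, acting on the tensor power. -/
def youngSymmetrizer {n : ℕ} (lam : Fin n → ℕ)
    (T : (Σ i : Fin n, Fin (lam i)) ≃ Fin (∑ i, lam i)) :
    tpow K V (∑ i, lam i) →ₗ[K] tpow K V (∑ i, lam i) :=
  ∑ σ ∈ Finset.univ.filter (fun σ : Equiv.Perm (Fin (∑ i, lam i)) =>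
      ∀ c : Σ i : Fin n, Fin (lam i), (T.symm (σ (T c))).1 = c.1),
    ∑ τ ∈ Finset.univ.filter (fun τ : Equiv.Perm (Fin (∑ i, lam i)) =>
      ∀ c : Σ i : Fin n, Fin (lam i), ((T.symm (τ (T c))).2 : ℕ) = (c.2 : ℕ)),
      ((Equiv.Perm.sign τ : ℤ)) • permAction K V _ (σ * τ)

/-- The Schur module S_lam V, realized as the image of the Young symmetrizer on the
tensor power. -/
def schurModule {n : ℕ} (lam : Fin n → ℕ)
    (T : (Σ i : Fin n, Fin (lam i)) ≃ Fin (∑ i, lam i)) :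
    Submodule K (tpow K V (∑ i, lam i)) :=
  LinearMap.range (youngSymmetrizer K V lam T)

/-- The diagonal action of an endomorphism g of V on the tensor power. -/
def diagAction (d : ℕ) (g : V →ₗ[K] V) : tpow K V d →ₗ[K] tpow K V d :=
  PiTensorProduct.map (fun _ => g)

/-- The submodule of SL(V)-invariant tensors. -/
def slInvariants (d : ℕ) : Submodule K (tpow K V d) :=
  ⨅ (g : V →ₗ[K] V) (_ : LinearMap.det g = 1),
    LinearMap.eqLocus (diagAction K V d g) LinearMap.id

end

section Pairing

variable {K V : Type*} [Field K] [AddCommGroup V] [Module K V]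

/-- The pairing of a tensor with a family of vectors induced by a bilinear form. -/
noncomputable def pairM (B : V →ₗ[K] V →ₗ[K] K) (d : ℕ) :
    tpow K V d →ₗ[K] MultilinearMap K (fun _ : Fin d => V) K :=
  PiTensorProduct.lift
    ((LinearMap.applyₗ (MultilinearMap.mkPiAlgebra K (Fin d) K)).compMultilinearMap
      ((MultilinearMap.compLinearMapMultilinear (R := K) (ι := Fin d) (M₁ := fun _ => V)
        (M₁' := fun _ => K) (M₂ := K)).compLinearMap (fun _ => B)))

lemma pairM_tprod (B : V →ₗ[K] V →ₗ[K] K) {d : ℕ} (u y : Fin d → V) :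
    pairM B d (PiTensorProduct.tprod K u) y = ∏ c, B (u c) (y c) := by
  simp [pairM]

lemma pairM_perm (B : V →ₗ[K] V →ₗ[K] K) {d : ℕ} (σ : Equiv.Perm (Fin d)) (x : tpow K V d)
    (y : Fin d → V) :
    pairM B d (permAction K V d σ x) y = pairM B d x (fun c => y (σ c)) := by
  induction x using PiTensorProduct.induction_on with
  | smul_tprod r u =>
    have : permAction K V d σ (PiTensorProduct.tprod K u)
        = PiTensorProduct.tprod K (fun c => u (σ.symm c)) := by
      simp only [permAction]
      exact PiTensorProduct.reindex_tprod σ u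
    rw [map_smul, map_smul, map_smul, smul_apply, smul_apply, this,
      pairM_tprod, pairM_tprod]
    congr 1
    exact (Fintype.prod_equiv σ _ _ (fun c => by simp)).symm
  | add a b ha hb => simp [ha, hb]

lemma pairM_diag (B : V →ₗ[K] V →ₗ[K] K) {d : ℕ} (g : V →ₗ[K] V)
    (hg : ∀ v w, B (g v) (g w) = B v w) (x : tpow K V d)
    (y : Fin d → V) :
    pairM B d (diagAction K V d g x) (fun c => g (y c)) = pairM B d x y := by
  induction x using PiTensorProduct.induction_on with
  | smul_tprod r u =>
    have : diagAction K V d g (PiTensorProduct.tprod K u)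
        = PiTensorProduct.tprod K (fun c => g (u c)) := by
      simp only [diagAction]
      exact PiTensorProduct.map_tprod _ u
    rw [map_smul, map_smul, map_smul, smul_apply, smul_apply, this,
      pairM_tprod, pairM_tprod]
    simp [hg]
  | add a b ha hb => simp [ha, hb]

lemma exists_dual_family [FiniteDimensional K V] (B : V →ₗ[K] V →ₗ[K] K)
    (hBnd : ∀ v, (∀ w, B v w = 0) → v = 0) {ι : Type*} [Fintype ι] (e : Module.Basis ι K V) :
    ∃ f : ι → V, (∀ i j, B (f i) (e j) = if i = j then 1 else 0) ∧
      ∀ v, v = ∑ i, B v (e i) • f i := by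
  have hinj : Function.Injective B := by
    rw [injective_iff_map_eq_zero]
    intro v hv
    exact hBnd v (fun w => by rw [hv]; rfl)
  have hsurj : Function.Surjective B := by
    refine (LinearMap.injective_iff_surjective_of_finrank_eq_finrank ?_).1 hinj
    exact (Subspace.dual_finrank_eq (K := K) (V := V)).symm
  choose f hf using fun i => hsurj (e.coord i)
  have h1 : ∀ i j, B (f i) (e j) = if i = j then 1 else 0 := by
    intro i j
    rw [hf, Module.Basis.coord_apply, Module.Basis.repr_self, Finsupp.single_apply]
    simp [eq_comm]
  refine ⟨f, h1, fun v => ?_⟩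
  apply hinj
  apply e.ext
  intro j
  simp [h1]

lemma pairM_surj [FiniteDimensional K V] (B : V →ₗ[K] V →ₗ[K] K)
    (hBnd : ∀ v, (∀ w, B v w = 0) → v = 0) {d : ℕ}
    (N : MultilinearMap K (fun _ : Fin d => V) K) : ∃ x, pairM B d x = N := by
  let e := Module.finBasis K V
  obtain ⟨f, h1, h2⟩ := exists_dual_family B hBnd e
  refine ⟨∑ κ : Fin d → Fin (Module.finrank K V), N (fun c => e (κ c)) •
    PiTensorProduct.tprod K (fun c => f (κ c)), ?_⟩
  refine Module.Basis.ext_multilinear (fun _ => e) (fun κ => ?_)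
  rw [map_sum, sum_apply, Finset.sum_eq_single κ]
  · rw [map_smul, smul_apply, pairM_tprod]
    simp [h1]
  · intro κ' _ hne
    obtain ⟨c, hc⟩ := Function.ne_iff.1 hne
    rw [map_smul, smul_apply, pairM_tprod,
      Finset.prod_eq_zero (Finset.mem_univ c) (by simp [h1, hc]), smul_zero]
  · simp

lemma pairM_inj [FiniteDimensional K V] (B : V →ₗ[K] V →ₗ[K] K)
    (hBnd : ∀ v, (∀ w, B v w = 0) → v = 0) {d : ℕ}
    (x : tpow K V d) (hx : ∀ y, pairM B d x y = 0) : x = 0 := by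
  let e := Module.finBasis K V
  obtain ⟨f, h1, h2⟩ := exists_dual_family B hBnd e
  have key : x = ∑ κ : Fin d → Fin (Module.finrank K V), pairM B d x (fun c => e (κ c)) •
    PiTensorProduct.tprod K (fun c => f (κ c)) := by
    clear hx
    induction x using PiTensorProduct.induction_on with
    | smul_tprod r u =>
      have : (PiTensorProduct.tprod K u : tpow K V d)
          = PiTensorProduct.tprod K (fun c => ∑ i, B (u c) (e i) • f i) := by
        congr 1
        ext c
        exact h2 (u c)
      conv_lhs => rw [this, MultilinearMap.map_sum, Finset.smul_sum]
      refine Finset.sum_congr rfl (fun κ _ => ?_)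
      rw [MultilinearMap.map_smul_univ, map_smul, smul_apply, pairM_tprod,
        smul_assoc]
    | add a b ha hb =>
      rw [map_add]
      simp only [add_apply, add_smul, Finset.sum_add_distrib]
      rw [← ha, ← hb]
  rw [key]
  simp [hx]

end Pairing

section Multilin

variable {K V : Type*} [Field K] [AddCommGroup V] [Module K V]

/-- Permutations preserving a labelling. -/
noncomputable def labG {d : ℕ} {ι : Type*} (row : Fin d → ι) : Finset (Equiv.Perm (Fin d)) :=
  Finset.univ.filter (fun σ => ∀ c, row (σ c) = row c)

lemma mem_labG {d : ℕ} {ι : Type*} (row : Fin d → ι) (σ : Equiv.Perm (Fin d)) :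
    σ ∈ labG row ↔ ∀ c, row (σ c) = row c := by
  simp [labG]

/-- Column antisymmetrization of a multilinear form. -/
noncomputable def colAlt {d : ℕ} (col : Fin d → ℕ) (N : MultilinearMap K (fun _ : Fin d => V) K) :
    MultilinearMap K (fun _ : Fin d => V) K :=
  ∑ τ ∈ labG col, ((Equiv.Perm.sign τ : ℤ)) • N.domDomCongr τ

lemma colAlt_apply {d : ℕ} (col : Fin d → ℕ) (N : MultilinearMap K (fun _ : Fin d => V) K)
    (y : Fin d → V) : colAlt col N y
      = ∑ τ ∈ labG col, ((Equiv.Perm.sign τ : ℤ)) • N (fun c => y (τ c)) := by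
  rw [colAlt, sum_apply]
  rfl

lemma colAlt_eq_zero {d : ℕ} (col : Fin d → ℕ) (N : MultilinearMap K (fun _ : Fin d => V) K)
    (y : Fin d → V) (c c' : Fin d) (hne : c ≠ c') (hc : col c = col c') (hy : y c = y c') :
    colAlt col N y = 0 := by
  rw [colAlt_apply]
  have hyy : ∀ x, y (Equiv.swap c c' x) = y x := by
    intro x
    rcases eq_or_ne x c with rfl | h1
    · simp [hy]
    rcases eq_or_ne x c' with rfl | h2
    · simp [hy]
    rw [Equiv.swap_apply_of_ne_of_ne h1 h2]
  have hcc : ∀ x, col (Equiv.swap c c' x) = col x := by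
    intro x
    rcases eq_or_ne x c with rfl | h1
    · simp [hc]
    rcases eq_or_ne x c' with rfl | h2
    · simp [hc]
    rw [Equiv.swap_apply_of_ne_of_ne h1 h2]
  refine Finset.sum_involution (fun τ _ => Equiv.swap c c' * τ) ?_ ?_ ?_ ?_
  · intro τ _
    simp [hyy, Equiv.Perm.sign_swap hne]
  · intro τ _ _ h
    have := congrArg (fun f => f * τ⁻¹) h
    simp only [mul_assoc, mul_inv_cancel, mul_one] at this
    exact hne (Equiv.swap_eq_one_iff.1 this)
  · intro τ hτ
    rw [mem_labG] at hτ ⊢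
    intro x
    simp [hcc, hτ]
  · intro τ _
    simp

lemma colAlt_update {d : ℕ} (col : Fin d → ℕ) (N : MultilinearMap K (fun _ : Fin d => V) K)
    (y : Fin d → V) (c c' : Fin d) (hne : c ≠ c') (hc : col c = col c') (a : K) :
    colAlt col N (Function.update y c (y c + a • y c')) = colAlt col N y := by
  have h0 : colAlt col N (Function.update y c (y c')) = 0 := by
    apply colAlt_eq_zero col N _ c c' hne hc
    rw [Function.update_self, Function.update_of_ne hne.symm]
  rw [MultilinearMap.map_update_add, MultilinearMap.map_update_smul, Function.update_eq_self,
    h0, smul_zero, add_zero]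

lemma colAlt_unip {d n : ℕ} (row : Fin d → Fin n) (col : Fin d → ℕ)
    (N : MultilinearMap K (fun _ : Fin d => V) K)
    (v : Fin n → V) (i j : Fin n) (hij : i ≠ j)
    (hrc : ∀ c, row c = j → ∃ c', row c' = i ∧ col c' = col c) (a : K) :
    colAlt col N (fun c => Function.update v j (v j + a • v i) (row c))
      = colAlt col N (fun c => v (row c)) := by
  have key : ∀ s : Finset (Fin d), (∀ c ∈ s, row c = j) →
      colAlt col N (fun c => if c ∈ s then v j + a • v i else v (row c))
        = colAlt col N (fun c => v (row c)) := by
    intro s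
    induction s using Finset.induction_on with
    | empty => simp
    | insert c s hcs ih =>
      intro h
      rw [← ih (fun c hc => h c (Finset.mem_insert_of_mem hc))]
      obtain ⟨c', h1, h2⟩ := hrc c (h c (Finset.mem_insert_self _ _))
      have hc's : c' ∉ s := fun hh => hij (h1.symm.trans (h c' (Finset.mem_insert_of_mem hh)))
      have hne : c ≠ c' := by
        rintro rfl
        exact hij (h1.symm.trans (h c (Finset.mem_insert_self _ _)))
      rw [← colAlt_update col N (fun c => if c ∈ s then v j + a • v i else v (row c)) c c' hne
        h2.symm a]
      congr 1
      ext x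
      rcases eq_or_ne x c with rfl | hx
      · simp [hcs, hc's, h1, h x (Finset.mem_insert_self _ _)]
      · simp [hx]
  rw [← key (Finset.univ.filter (fun c => row c = j)) (by simp)]
  congr 1
  ext c
  by_cases hc : row c = j
  · simp [hc]
  · simp [hc]

lemma multi_scale {d n : ℕ} (row : Fin d → Fin n) (N : MultilinearMap K (fun _ : Fin d => V) K)
    (v : Fin n → V) (j : Fin n) (a : K) :
    N (fun c => Function.update v j (a • v j) (row c))
      = a ^ (Finset.univ.filter (fun c => row c = j)).card * N (fun c => v (row c)) := by
  have : (fun c => Function.update v j (a • v j) (row c))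
      = fun c => (if row c = j then a else 1) • v (row c) := by
    ext c
    by_cases hc : row c = j
    · simp [hc]
    · simp [hc]
  rw [this, MultilinearMap.map_smul_univ, Finset.prod_ite]
  simp

lemma multi_poly {d n : ℕ} (row : Fin d → Fin n) (N : MultilinearMap K (fun _ : Fin d => V) K)
    (v w : Fin n → V) :
    ∃ p : Polynomial K, ∀ t, p.eval t = N (fun c => (v + t • w) (row c)) := by
  refine ⟨∑ s : Finset (Fin d), Polynomial.C (N (s.piecewise (fun c => v (row c))
    (fun c => w (row c)))) * Polynomial.X ^ (sᶜ).card, fun t => ?_⟩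
  have : (fun c => (v + t • w) (row c)) = (fun c => v (row c)) + (fun c => t • w (row c)) := rfl
  rw [this, MultilinearMap.map_add_univ, Polynomial.eval_finsetSum]
  refine Finset.sum_congr rfl (fun s _ => ?_)
  have h2 := N.map_piecewise_smul (fun _ => t) (s.piecewise (fun c => v (row c))
    (fun c => w (row c))) sᶜ
  have h3 : (sᶜ).piecewise (fun i => t • s.piecewise (fun c => v (row c))
      (fun c => w (row c)) i) (s.piecewise (fun c => v (row c)) (fun c => w (row c)))
      = s.piecewise (fun c => v (row c)) (fun c => t • w (row c)) := by
    ext c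
    by_cases hc : c ∈ s
    · simp [hc]
    · simp [hc]
  rw [h3] at h2
  rw [h2, Polynomial.eval_mul, Polynomial.eval_C, Polynomial.eval_pow, Polynomial.eval_X,
    Finset.prod_const, smul_eq_mul, mul_comm]

lemma multi_polar [CharZero K] {d n : ℕ} (row : Fin d → Fin n)
    (N : MultilinearMap K (fun _ : Fin d => V) K)
    (hsym : ∀ σ ∈ labG row, ∀ y, N (fun c => y (σ c)) = N y)
    (hN : ∀ v : Fin n → V, N (fun c => v (row c)) = 0) (y : Fin d → V) : N y = 0 := by
  let P : MvPolynomial (Fin d) K := ∑ r : Fin d → Fin d,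
    MvPolynomial.C (if ∀ c, row (r c) = row c then N (fun c => y (r c)) else 0) *
      ∏ c, MvPolynomial.X (r c)
  have hP : P = 0 := by
    apply MvPolynomial.funext
    intro t
    have := hN (fun i => ∑ c', (if row c' = i then t c' else 0) • y c')
    rw [MultilinearMap.map_sum] at this
    rw [map_zero, ← this, map_sum]
    refine Finset.sum_congr rfl (fun r _ => ?_)
    rw [MultilinearMap.map_smul_univ, map_mul, map_prod]
    simp only [MvPolynomial.eval_C, MvPolynomial.eval_X, smul_eq_mul]
    by_cases h : ∀ c, row (r c) = row c
    · simp [h, mul_comm]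
    · rw [if_neg h, zero_mul]
      push Not at h
      obtain ⟨c, hc⟩ := h
      rw [Finset.prod_eq_zero (Finset.mem_univ c) (by simp [hc]), zero_mul]
  have hcoef := congrArg (MvPolynomial.coeff (∑ c : Fin d, Finsupp.single c 1)) hP
  have hX : ∀ r : Fin d → Fin d, (∏ c, MvPolynomial.X (r c) : MvPolynomial (Fin d) K)
      = MvPolynomial.monomial (∑ c, Finsupp.single (r c) 1) 1 := by
    intro r
    rw [MvPolynomial.monomial_sum_one]
    rfl
  have hbij : ∀ r : Fin d → Fin d, (∑ c, Finsupp.single (r c) 1 : Fin d →₀ ℕ)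
      = ∑ c, Finsupp.single c 1 ↔ Function.Bijective r := by
    intro r
    constructor
    · intro h
      rw [← Finite.surjective_iff_bijective]
      intro c
      by_contra hc
      push Not at hc
      have := DFunLike.congr_fun h c
      simp [Finsupp.finsetSum_apply, Finsupp.single_apply, hc] at this
    · intro h
      exact Fintype.sum_equiv (Equiv.ofBijective r h) _ _ (fun c => rfl)
  rw [MvPolynomial.coeff_zero, MvPolynomial.coeff_sum] at hcoef
  simp only [hX, MvPolynomial.coeff_C_mul, MvPolynomial.coeff_monomial, hbij] at hcoef
  have hval : ∀ r : Fin d → Fin d, ((if ∀ c, row (r c) = row c then N (fun c => y (r c)) else 0)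
      * (if Function.Bijective r then (1 : K) else 0))
      = (if (∀ c, row (r c) = row c) ∧ Function.Bijective r then (1 : K) else 0) * N y := by
    intro r
    by_cases h1 : ∀ c, row (r c) = row c
    · by_cases h2 : Function.Bijective r
      · have := hsym (Equiv.ofBijective r h2) (by rw [mem_labG]; exact h1) y
        simp only [Equiv.ofBijective_apply] at this
        rw [if_pos h1, if_pos h2, if_pos ⟨h1, h2⟩, this, mul_one, one_mul]
      · have h3 : ¬ ((∀ c, row (r c) = row c) ∧ Function.Bijective r) := fun h => h2 h.2
        rw [if_neg h2, if_neg h3, mul_zero, zero_mul]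
    · simp [h1]
  simp only [hval] at hcoef
  rw [← Finset.sum_mul, Finset.sum_boole] at hcoef
  refine (mul_eq_zero.1 hcoef).resolve_left ?_
  refine Nat.cast_ne_zero.2 (Finset.card_ne_zero.2 ?_)
  exact ⟨id, Finset.mem_filter.2 ⟨Finset.mem_univ _, fun _ => rfl, Function.bijective_id⟩⟩

end Multilin

section Vanish

variable {K V : Type*} [Field K] [AddCommGroup V] [Module K V]

lemma poly_vanish [CharZero K] (p q : Polynomial K) (hq : q ≠ 0)
    (h : ∀ t, q.eval t ≠ 0 → p.eval t = 0) : p = 0 := by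
  have : p * q = 0 := by
    apply Polynomial.funext
    intro t
    by_cases ht : q.eval t = 0
    · simp [ht]
    · simp [h t ht]
  exact (mul_eq_zero.1 this).resolve_right hq

lemma quad_vanish [CharZero K] (p : Polynomial K) (a b c : K) (ha : a ≠ 0)
    (h : ∀ t, a * t ^ 2 + b * t + c ≠ 0 → p.eval t = 0) : p = 0 := by
  refine poly_vanish p (Polynomial.C a * Polynomial.X ^ 2 + Polynomial.C b * Polynomial.X
    + Polynomial.C c) ?_ ?_
  · intro h0
    have := congrArg (fun q => Polynomial.coeff q 2) h0
    simp at this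
    exact ha this
  · intro t ht
    apply h
    simpa using ht

lemma span_unip {n : ℕ} (F : (Fin n → V) → K)
    (h1 : ∀ v i j (c : K), i < j → F (Function.update v j (v j + c • v i)) = F v)
    (v : Fin n → V) (j : Fin n) (a : Fin n → K) (s : Finset (Fin n)) (hs : ∀ i ∈ s, i < j) :
    F (Function.update v j (v j + ∑ i ∈ s, a i • v i)) = F v := by
  induction s using Finset.induction_on with
  | empty => simp
  | insert i s his ih =>
    have hij := hs i (Finset.mem_insert_self _ _)
    rw [← ih (fun x hx => hs x (Finset.mem_insert_of_mem hx)),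
      ← h1 (Function.update v j (v j + ∑ i ∈ s, a i • v i)) i j (a i) hij]
    rw [Finset.sum_insert his, Function.update_self, Function.update_of_ne hij.ne,
      Function.update_idem]
    congr 2
    abel

lemma proj_exists {n : ℕ} (B : V →ₗ[K] V →ₗ[K] K) (S : Finset (Fin n)) (star : Fin n → Fin n)
    (hstar : ∀ i, star (star i) = i) (hS : ∀ i ∈ S, star i ∈ S) (ε : Fin n → K)
    (hε : ∀ i, ε i * ε i = 1) (u : Fin n → V)
    (hu : ∀ i ∈ S, ∀ j ∈ S, B (u i) (u j) = if j = star i then ε i else 0) (v : V) :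
    ∃ a : Fin n → K, ∀ j ∈ S, B (v + ∑ i ∈ S, a i • u i) (u j) = 0 := by
  refine ⟨fun i => - ε i * B v (u (star i)), fun j hj => ?_⟩
  rw [map_add, LinearMap.add_apply, map_sum, LinearMap.sum_apply,
    Finset.sum_eq_single (star j)]
  · rw [map_smul, LinearMap.smul_apply, hu _ (hS j hj) _ hj, hstar, if_pos rfl, smul_eq_mul]
    simp only [hstar]
    linear_combination (- B v (u j)) * hε (star j)
  · intro i hi hne
    rw [map_smul, LinearMap.smul_apply, hu _ hi _ hj, if_neg, smul_zero]
    rintro rfl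
    exact hne (hstar i).symm
  · intro h
    exact absurd (hS j hj) h

lemma compl_exists [FiniteDimensional K V] {n : ℕ} (B : V →ₗ[K] V →ₗ[K] K)
    (hBnd : ∀ v, (∀ w, B v w = 0) → v = 0)
    (S : Finset (Fin n)) (star : Fin n → Fin n)
    (hstar : ∀ i, star (star i) = i) (hS : ∀ i ∈ S, star i ∈ S) (ε : Fin n → K)
    (hε : ∀ i, ε i * ε i = 1) (u : Fin n → V)
    (hu : ∀ i ∈ S, ∀ j ∈ S, B (u i) (u j) = if j = star i then ε i else 0)
    (hcard : S.card < Module.finrank K V) :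
    ∃ w₁ w₂, (∀ j ∈ S, B w₁ (u j) = 0) ∧ (∀ j ∈ S, B w₂ (u j) = 0) ∧ B w₁ w₂ ≠ 0 := by
  by_contra hcon
  push Not at hcon
  have hspan : (⊤ : Submodule K V) ≤ Submodule.span K (S.image u : Set V) := by
    intro v _
    obtain ⟨a, ha⟩ := proj_exists B S star hstar hS ε hε u hu v
    have h0 : v + ∑ i ∈ S, a i • u i = 0 := by
      apply hBnd
      intro w
      obtain ⟨b, hb⟩ := proj_exists B S star hstar hS ε hε u hu w
      have := hcon _ _ ha hb
      rw [map_add (B _), map_sum] at this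
      have hz : ∑ i ∈ S, B (v + ∑ i ∈ S, a i • u i) (b i • u i) = 0 := by
        refine Finset.sum_eq_zero (fun i hi => ?_)
        rw [map_smul, ha i hi, smul_zero]
      rw [hz, add_zero] at this
      exact this
    rw [eq_neg_of_add_eq_zero_left h0]
    refine Submodule.neg_mem _ (Submodule.sum_mem _ (fun i hi => Submodule.smul_mem _ _ ?_))
    apply Submodule.subset_span
    simp only [Finset.coe_image]
    exact ⟨i, hi, rfl⟩
  have h1 := finrank_span_finset_le_card (R := K) (S.image u)
  have h2 : Submodule.span K (S.image u : Set V) = ⊤ := top_le_iff.1 hspan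
  rw [Set.finrank, h2, finrank_top] at h1
  have := Finset.card_image_le (s := S) (f := u)
  omega

lemma orth_vanish [IsAlgClosed K] [CharZero K] [FiniteDimensional K V] {n : ℕ}
    (hn : Module.finrank K V = n)
    (B : V →ₗ[K] V →ₗ[K] K) (hBsymm : ∀ v w, B v w = B w v)
    (hBnd : ∀ v, (∀ w, B v w = 0) → v = 0) (lam : Fin n → ℕ)
    (F : (Fin n → V) → K)
    (h1 : ∀ v i j (c : K), i < j → F (Function.update v j (v j + c • v i)) = F v)
    (h2 : ∀ v j (c : K), F (Function.update v j (c • v j)) = c ^ lam j * F v)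
    (h3 : ∀ v w, ∃ p : Polynomial K, ∀ t, p.eval t = F (v + t • w))
    (h4 : ∀ v, (∀ i j, B (v i) (v j) = if i = j then 1 else 0) → F v = 0) :
    ∀ v, F v = 0 := by
  have main : ∀ l k : ℕ, k + l = n → ∀ v : Fin n → V,
      (∀ i j : Fin n, i.val < k → j.val < k → B (v i) (v j) = if i = j then 1 else 0) →
      F v = 0 := by
    intro l
    induction l with
    | zero =>
      intro k hk v hv
      exact h4 v (fun i j => hv i j (by omega) (by omega))
    | succ l ih =>
      intro k hk v hv
      have hkn : k < n := by omega
      obtain ⟨a, ha⟩ : ∃ a : Fin n, a.val = k := ⟨⟨k, hkn⟩, rfl⟩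
      have hcase : ∀ i : Fin n, i.val < k + 1 → i.val < k ∨ i = a := by
        intro i hi
        rcases Nat.lt_succ_iff_lt_or_eq.1 hi with h | h
        · exact Or.inl h
        · exact Or.inr (Fin.ext (by omega))
      have hne : ∀ i : Fin n, i.val < k → i ≠ a := by
        rintro i hi rfl
        omega
      -- the nondegenerate case
      have sub1 : ∀ v : Fin n → V,
          (∀ i j : Fin n, i.val < k → j.val < k → B (v i) (v j) = if i = j then 1 else 0) →
          (∀ j : Fin n, j.val < k → B (v a) (v j) = 0) → B (v a) (v a) ≠ 0 → F v = 0 := by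
        intro v hv hva hvv
        obtain ⟨s, hs⟩ := IsAlgClosed.exists_pow_nat_eq (B (v a) (v a)) (n := 2) (by norm_num)
        have hs0 : s ≠ 0 := by
          rintro rfl
          apply hvv
          rw [← hs]
          simp
        have := ih (k + 1) (by omega) (Function.update v a (s⁻¹ • v a)) (by
          intro i j hi hj
          rcases hcase i hi with hi | rfl
          · rcases hcase j hj with hj | rfl
            · rw [Function.update_of_ne (hne i hi), Function.update_of_ne (hne j hj), hv i j hi hj]
            · rw [Function.update_of_ne (hne i hi), Function.update_self, map_smul, hBsymm,
                hva i hi, smul_zero, if_neg (hne i hi)]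
          · rcases hcase j hj with hj | rfl
            · rw [Function.update_of_ne (hne j hj), Function.update_self, map_smul,
                LinearMap.smul_apply, hva j hj, smul_zero, if_neg (hne j hj).symm]
            · rw [Function.update_self, map_smul, map_smul, LinearMap.smul_apply, ← hs, if_pos rfl,
                smul_eq_mul, smul_eq_mul]
              field_simp)
        rw [h2] at this
        exact (mul_eq_zero.1 this).resolve_left (pow_ne_zero _ (inv_ne_zero hs0))
      -- projecting
      let S : Finset (Fin n) := Finset.univ.filter (fun i => i.val < k)
      have hSm : ∀ i, i ∈ S ↔ i.val < k := by simp [S]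
      have hScard : S.card < Module.finrank K V := by
        rw [hn]
        refine (Finset.card_lt_card (t := Finset.univ) ?_).trans_eq (by simp)
        refine Finset.ssubset_univ_iff.2 (fun h => ?_)
        have := (hSm a).1 (h ▸ Finset.mem_univ a)
        omega
      have hSu : ∀ i ∈ S, ∀ j ∈ S, B (v i) (v j) = if j = id i then 1 else 0 := by
        intro i hi j hj
        rw [hv i j ((hSm i).1 hi) ((hSm j).1 hj)]
        simp [eq_comm]
      obtain ⟨c, hc⟩ := proj_exists B S id (fun _ => rfl) (fun _ h => h) (fun _ => 1)
        (fun _ => one_mul 1) v hSu (v a)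
      have hF := span_unip F h1 v a c S (fun i hi => by
        have := (hSm i).1 hi
        exact Fin.lt_def.2 (by omega))
      rw [← hF]
      obtain ⟨w, hw, hww⟩ : ∃ w, (∀ j ∈ S, B w (v j) = 0) ∧ B w w ≠ 0 := by
        obtain ⟨w₁, w₂, e1, e2, e3⟩ := compl_exists B hBnd S id (fun _ => rfl) (fun _ h => h)
          (fun _ => 1) (fun _ => one_mul 1) v hSu hScard
        by_contra hcon
        push Not at hcon
        have a1 := hcon w₁ e1
        have a2 := hcon w₂ e2
        have a3 := hcon (w₁ + w₂) (fun j hj => by simp [e1 j hj, e2 j hj])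
        simp only [map_add, LinearMap.add_apply, a1, a2, hBsymm w₂ w₁] at a3
        apply e3
        have : (2 : K) * B w₁ w₂ = 0 := by linear_combination a3
        simpa using this
      set v' := Function.update v a (v a + ∑ i ∈ S, c i • v i) with hv'
      have hv'1 : ∀ i : Fin n, i.val < k → v' i = v i := fun i hi =>
        Function.update_of_ne (hne i hi) _ _
      have hv'2 : v' a = v a + ∑ i ∈ S, c i • v i := Function.update_self _ _ _
      obtain ⟨p, hp⟩ := h3 v' (Function.update 0 a w)
      have hp0 : p = 0 := by
        refine quad_vanish p (B w w) (2 * B (v' a) w) (B (v' a) (v' a)) hww (fun t ht => ?_)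
        rw [hp]
        have e1 : ∀ i : Fin n, i.val < k → (v' + t • (Function.update 0 a w : Fin n → V)) i = v i := by
          intro i hi
          simp [hv'1 i hi, hne i hi]
        have e2 : (v' + t • (Function.update 0 a w : Fin n → V)) a = v' a + t • w := by
          simp
        apply sub1
        · intro i j hi hj
          rw [e1 i hi, e1 j hj, hv i j hi hj]
        · intro j hj
          rw [e1 j hj, e2, map_add, LinearMap.add_apply, map_smul, LinearMap.smul_apply,
            hw j ((hSm j).2 hj), hv'2, hc j ((hSm j).2 hj)]
          simp
        · rw [e2]
          simp only [map_add, LinearMap.add_apply, map_smul, LinearMap.smul_apply, smul_eq_mul]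
          intro h0
          apply ht
          rw [← h0, hBsymm w (v' a)]
          ring
      have := hp 0
      rw [hp0] at this
      simpa using this.symm
  intro v
  exact main n 0 (by omega) v (fun i j hi => absurd hi (by omega))

/-- The index dual to a given one in a symplectic basis. -/
def sstar {m : ℕ} (i : Fin (2 * m)) : Fin (2 * m) :=
  ⟨if i.val % 2 = 0 then i.val + 1 else i.val - 1, by
    have := i.isLt
    split_ifs <;> omega⟩

lemma sstar_val {m : ℕ} (i : Fin (2 * m)) :
    (sstar i).val = if i.val % 2 = 0 then i.val + 1 else i.val - 1 := rfl

lemma sstar_sstar {m : ℕ} (i : Fin (2 * m)) : sstar (sstar i) = i := by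
  apply Fin.ext
  simp only [sstar_val]
  split_ifs <;> omega

/-- The sign attached to an index of a symplectic basis. -/
def seps (K : Type*) [Field K] {m : ℕ} (i : Fin (2 * m)) : K :=
  if i.val % 2 = 0 then 1 else -1

lemma seps_mul {m : ℕ} (i : Fin (2 * m)) : seps K i * seps K i = 1 := by
  unfold seps
  split_ifs <;> simp

lemma symp_vanish [CharZero K] [FiniteDimensional K V] {m : ℕ}
    (hn : Module.finrank K V = 2 * m)
    (B : V →ₗ[K] V →ₗ[K] K) (hBalt : ∀ v, B v v = 0)
    (hBnd : ∀ v, (∀ w, B v w = 0) → v = 0) (lam : Fin (2 * m) → ℕ)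
    (F : (Fin (2 * m) → V) → K)
    (h1 : ∀ v i j (c : K), i < j → F (Function.update v j (v j + c • v i)) = F v)
    (h2 : ∀ v j (c : K), F (Function.update v j (c • v j)) = c ^ lam j * F v)
    (h3 : ∀ v w, ∃ p : Polynomial K, ∀ t, p.eval t = F (v + t • w))
    (h4 : ∀ v, (∀ i j, B (v i) (v j) = if j = sstar i then seps K i else 0) → F v = 0) :
    ∀ v, F v = 0 := by
  have hskew : ∀ v w, B v w = - B w v := by
    intro v w
    have := hBalt (v + w)
    simp only [map_add, LinearMap.add_apply, hBalt] at this
    linear_combination this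
  have main : ∀ l r : ℕ, r + l = m → ∀ v : Fin (2 * m) → V,
      (∀ i j : Fin (2 * m), i.val < 2 * r → j.val < 2 * r →
        B (v i) (v j) = if j = sstar i then seps K i else 0) →
      F v = 0 := by
    intro l
    induction l with
    | zero =>
      intro r hk v hv
      exact h4 v (fun i j => hv i j (by omega) (by omega))
    | succ l ih =>
      intro r hr v hv
      obtain ⟨a, ha⟩ : ∃ a : Fin (2 * m), a.val = 2 * r := ⟨⟨2 * r, by omega⟩, rfl⟩
      obtain ⟨b, hb⟩ : ∃ b : Fin (2 * m), b.val = 2 * r + 1 := ⟨⟨2 * r + 1, by omega⟩, rfl⟩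
      have hab : a ≠ b := by
        rintro rfl
        omega
      have hcase : ∀ i : Fin (2 * m), i.val < 2 * (r + 1) → i.val < 2 * r ∨ i = a ∨ i = b := by
        intro i hi
        simp only [Fin.ext_iff]
        omega
      have hnea : ∀ i : Fin (2 * m), i.val < 2 * r → i ≠ a := by
        rintro i hi rfl
        omega
      have hneb : ∀ i : Fin (2 * m), i.val < 2 * r → i ≠ b := by
        rintro i hi rfl
        omega
      have hsa : sstar a = b := by
        apply Fin.ext
        rw [sstar_val, if_pos (by omega)]
        omega
      have hsb : sstar b = a := by
        rw [← hsa, sstar_sstar]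
      have hslt : ∀ i : Fin (2 * m), i.val < 2 * r → (sstar i).val < 2 * r := by
        intro i hi
        rw [sstar_val]
        split_ifs <;> omega
      have hea : seps K a = 1 := by
        unfold seps
        rw [if_pos (by omega)]
      have heb : seps K b = -1 := by
        unfold seps
        rw [if_neg (by omega)]
      -- the nondegenerate case
      have sub1 : ∀ v : Fin (2 * m) → V,
          (∀ i j : Fin (2 * m), i.val < 2 * r → j.val < 2 * r →
            B (v i) (v j) = if j = sstar i then seps K i else 0) →
          (∀ j : Fin (2 * m), j.val < 2 * r → B (v a) (v j) = 0) →
          (∀ j : Fin (2 * m), j.val < 2 * r → B (v b) (v j) = 0) →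
          B (v a) (v b) ≠ 0 → F v = 0 := by
        intro v hv hva hvb hvv
        set s := B (v a) (v b) with hs
        set v' := Function.update v a (s⁻¹ • v a) with hv'
        have e1 : ∀ i : Fin (2 * m), i.val < 2 * r → v' i = v i := fun i hi =>
          Function.update_of_ne (hnea i hi) _ _
        have e2 : v' a = s⁻¹ • v a := Function.update_self _ _ _
        have e3 : v' b = v b := Function.update_of_ne hab.symm _ _
        have n1 : ∀ i : Fin (2 * m), i.val < 2 * r → a ≠ sstar i := by
          rintro i hi rfl
          have := hslt i hi
          omega
        have n2 : ∀ i : Fin (2 * m), i.val < 2 * r → b ≠ sstar i := by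
          rintro i hi rfl
          have := hslt i hi
          omega
        have := ih (r + 1) (by omega) v' (by
          intro i j hi hj
          rcases hcase i hi with hi | rfl | rfl
          · rcases hcase j hj with hj | rfl | rfl
            · rw [e1 i hi, e1 j hj, hv i j hi hj]
            · rw [e1 i hi, e2, map_smul, hskew, hva i hi, if_neg (n1 i hi)]
              simp
            · rw [e1 i hi, e3, hskew, hvb i hi, if_neg (n2 i hi)]
              simp
          · rcases hcase j hj with hj | rfl | rfl
            · rw [e1 j hj, e2, map_smul, LinearMap.smul_apply, hva j hj, smul_zero, hsa,
                if_neg (hneb j hj)]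
            · rw [hBalt, hsa, if_neg hab]
            · rw [e2, e3, map_smul, LinearMap.smul_apply, ← hs, hsa, if_pos rfl, hea, smul_eq_mul,
                inv_mul_cancel₀ hvv]
          · rcases hcase j hj with hj | rfl | rfl
            · rw [e1 j hj, e3, hvb j hj, hsb, if_neg (hnea j hj)]
            · rw [e2, e3, map_smul, hskew, ← hs, hsb, if_pos rfl, heb, smul_eq_mul,
                mul_neg, inv_mul_cancel₀ hvv]
            · rw [hBalt, hsb, if_neg hab.symm])
        rw [hv', h2] at this
        exact (mul_eq_zero.1 this).resolve_left (pow_ne_zero _ (inv_ne_zero hvv))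
      -- projecting
      let S : Finset (Fin (2 * m)) := Finset.univ.filter (fun i => i.val < 2 * r)
      have hSm : ∀ i, i ∈ S ↔ i.val < 2 * r := by simp [S]
      have hScard : S.card < Module.finrank K V := by
        rw [hn]
        refine (Finset.card_lt_card (t := Finset.univ) ?_).trans_eq (by simp)
        refine Finset.ssubset_univ_iff.2 (fun h => ?_)
        have := (hSm a).1 (h ▸ Finset.mem_univ a)
        omega
      have hSs : ∀ i ∈ S, sstar i ∈ S := fun i hi => (hSm _).2 (hslt i ((hSm i).1 hi))
      have hSu : ∀ i ∈ S, ∀ j ∈ S, B (v i) (v j) = if j = sstar i then seps K i else 0 :=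
        fun i hi j hj => hv i j ((hSm i).1 hi) ((hSm j).1 hj)
      obtain ⟨c, hc⟩ := proj_exists B S sstar sstar_sstar hSs (seps K) seps_mul v hSu (v a)
      obtain ⟨c', hc'⟩ := proj_exists B S sstar sstar_sstar hSs (seps K) seps_mul v hSu (v b)
      have hF := span_unip F h1 v a c S (fun i hi => by
        have := (hSm i).1 hi
        exact Fin.lt_def.2 (by omega))
      rw [← hF]
      obtain ⟨w₁, w₂, hw₁, hw₂, hww⟩ := compl_exists B hBnd S sstar sstar_sstar hSs
        (seps K) seps_mul v hSu hScard
      set v' := Function.update v a (v a + ∑ i ∈ S, c i • v i) with hv'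
      have hv'1 : ∀ i : Fin (2 * m), i.val < 2 * r → v' i = v i := fun i hi =>
        Function.update_of_ne (hnea i hi) _ _
      have hv'2 : v' a = v a + ∑ i ∈ S, c i • v i := Function.update_self _ _ _
      have hv'3 : v' b = v b := Function.update_of_ne hab.symm _ _
      have hF' := span_unip F h1 v' b c' S (fun i hi => by
        have := (hSm i).1 hi
        exact Fin.lt_def.2 (by omega))
      rw [← hF']
      set v'' := Function.update v' b (v' b + ∑ i ∈ S, c' i • v' i) with hv''
      have hv''1 : ∀ i : Fin (2 * m), i.val < 2 * r → v'' i = v i := fun i hi => by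
        rw [hv'', Function.update_of_ne (hneb i hi), hv'1 i hi]
      have hv''2 : v'' a = v a + ∑ i ∈ S, c i • v i := by
        rw [hv'', Function.update_of_ne hab, hv'2]
      have hv''3 : v'' b = v b + ∑ i ∈ S, c' i • v i := by
        rw [hv'', Function.update_self, hv'3]
        congr 1
        exact Finset.sum_congr rfl (fun i hi => by rw [hv'1 i ((hSm i).1 hi)])
      set W : Fin (2 * m) → V := Function.update (Function.update 0 a w₁) b w₂ with hW
      have hWa : W a = w₁ := by simp [hW, hab]
      have hWb : W b = w₂ := by simp [hW]
      have hWi : ∀ i : Fin (2 * m), i.val < 2 * r → W i = 0 := fun i hi => by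
        simp [hW, hnea i hi, hneb i hi]
      obtain ⟨p, hp⟩ := h3 v'' W
      have hp0 : p = 0 := by
        refine quad_vanish p (B w₁ w₂) (B (v'' a) w₂ + B w₁ (v'' b)) (B (v'' a) (v'' b)) hww
          (fun t ht => ?_)
        rw [hp]
        have e1 : ∀ i : Fin (2 * m), i.val < 2 * r → (v'' + t • W) i = v i := by
          intro i hi
          rw [Pi.add_apply, Pi.smul_apply, hWi i hi, smul_zero, add_zero, hv''1 i hi]
        have e2 : (v'' + t • W) a = v'' a + t • w₁ := by
          rw [Pi.add_apply, Pi.smul_apply, hWa]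
        have e3 : (v'' + t • W) b = v'' b + t • w₂ := by
          rw [Pi.add_apply, Pi.smul_apply, hWb]
        apply sub1
        · intro i j hi hj
          rw [e1 i hi, e1 j hj, hv i j hi hj]
        · intro j hj
          rw [e1 j hj, e2, map_add, LinearMap.add_apply, map_smul, LinearMap.smul_apply,
            hw₁ j ((hSm j).2 hj), hv''2, hc j ((hSm j).2 hj)]
          simp
        · intro j hj
          rw [e1 j hj, e3, map_add, LinearMap.add_apply, map_smul, LinearMap.smul_apply,
            hw₂ j ((hSm j).2 hj), hv''3, hc' j ((hSm j).2 hj)]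
          simp
        · rw [e2, e3]
          simp only [map_add, LinearMap.add_apply, map_smul, LinearMap.smul_apply, smul_eq_mul]
          intro h0
          apply ht
          rw [← h0]
          ring
      have := hp 0
      rw [hp0] at this
      simpa using this.symm
  intro v
  exact main m 0 (by omega) v (fun i j hi => absurd hi (by omega))

end Vanish

section Core

variable {K V : Type*} [Field K] [AddCommGroup V] [Module K V]

/-- Row of a box. -/
def rowT {n : ℕ} {lam : Fin n → ℕ} (T : (Σ i : Fin n, Fin (lam i)) ≃ Fin (∑ i, lam i))
    (c : Fin (∑ i, lam i)) : Fin n := (T.symm c).1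

/-- Column of a box. -/
def colT {n : ℕ} {lam : Fin n → ℕ} (T : (Σ i : Fin n, Fin (lam i)) ≃ Fin (∑ i, lam i))
    (c : Fin (∑ i, lam i)) : ℕ := ((T.symm c).2 : ℕ)

lemma box_ext {n : ℕ} {lam : Fin n → ℕ} (T : (Σ i : Fin n, Fin (lam i)) ≃ Fin (∑ i, lam i))
    (c c' : Fin (∑ i, lam i)) (h1 : rowT T c = rowT T c') (h2 : colT T c = colT T c') :
    c = c' := by
  apply T.symm.injective
  unfold rowT at h1
  unfold colT at h2
  revert h1 h2
  generalize T.symm c = p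
  generalize T.symm c' = q
  obtain ⟨i, l⟩ := p
  obtain ⟨j, k⟩ := q
  intro h1 h2
  dsimp only at h1 h2
  subst h1
  rw [Fin.ext h2]

lemma rowT_mk {n : ℕ} {lam : Fin n → ℕ} (T : (Σ i : Fin n, Fin (lam i)) ≃ Fin (∑ i, lam i))
    (i : Fin n) (l : Fin (lam i)) : rowT T (T ⟨i, l⟩) = i := by
  simp [rowT]

lemma colT_mk {n : ℕ} {lam : Fin n → ℕ} (T : (Σ i : Fin n, Fin (lam i)) ≃ Fin (∑ i, lam i))
    (i : Fin n) (l : Fin (lam i)) : colT T (T ⟨i, l⟩) = l :=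
  congrArg (fun p : Σ i : Fin n, Fin (lam i) => (p.2 : ℕ)) (T.symm_apply_apply ⟨i, l⟩)

lemma colT_lt {n : ℕ} {lam : Fin n → ℕ} (T : (Σ i : Fin n, Fin (lam i)) ≃ Fin (∑ i, lam i))
    (c : Fin (∑ i, lam i)) : colT T c < lam (rowT T c) := (T.symm c).2.isLt

lemma prod_row {n : ℕ} {lam : Fin n → ℕ} (T : (Σ i : Fin n, Fin (lam i)) ≃ Fin (∑ i, lam i))
    (s : Fin n → K) : ∏ c, s (rowT T c) = ∏ i, s i ^ lam i := by
  rw [← Fintype.prod_equiv T (fun p => s p.1) _ (fun p => by simp [rowT]), Fintype.prod_sigma]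
  simp

lemma card_row {n : ℕ} {lam : Fin n → ℕ} (T : (Σ i : Fin n, Fin (lam i)) ≃ Fin (∑ i, lam i))
    (j : Fin n) : (Finset.univ.filter (fun c => rowT T c = j)).card = lam j := by
  have : Finset.univ.filter (fun c => rowT T c = j)
      = (Finset.univ : Finset (Fin (lam j))).image (fun l => T ⟨j, l⟩) := by
    ext c
    simp only [Finset.mem_filter, Finset.mem_univ, true_and, Finset.mem_image]
    constructor
    · rintro rfl
      exact ⟨(T.symm c).2, by simp [rowT]⟩
    · rintro ⟨l, rfl⟩
      exact rowT_mk T j l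
  rw [this, Finset.card_image_of_injective, Finset.card_univ, Fintype.card_fin]
  intro l l' h
  have := T.injective h
  simpa using this

lemma pair_young (B : V →ₗ[K] V →ₗ[K] K) {n : ℕ} {lam : Fin n → ℕ}
    (T : (Σ i : Fin n, Fin (lam i)) ≃ Fin (∑ i, lam i)) (z : tpow K V (∑ i, lam i))
    (y : Fin (∑ i, lam i) → V) :
    pairM B _ (youngSymmetrizer K V lam T z) y
      = ∑ σ ∈ labG (rowT T), ∑ τ ∈ labG (colT T),
          ((Equiv.Perm.sign τ : ℤ)) • pairM B _ z (fun c => y (σ (τ c))) := by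
  have hr : Finset.univ.filter (fun σ : Equiv.Perm (Fin (∑ i, lam i)) =>
      ∀ c : Σ i : Fin n, Fin (lam i), (T.symm (σ (T c))).1 = c.1) = labG (rowT T) := by
    ext σ
    rw [mem_labG, Finset.mem_filter]
    simp only [Finset.mem_univ, true_and]
    constructor
    · intro h c
      simpa [rowT] using h (T.symm c)
    · intro h c
      simpa [rowT] using h (T c)
  have hc : Finset.univ.filter (fun τ : Equiv.Perm (Fin (∑ i, lam i)) =>
      ∀ c : Σ i : Fin n, Fin (lam i), ((T.symm (τ (T c))).2 : ℕ) = (c.2 : ℕ))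
      = labG (colT T) := by
    ext σ
    rw [mem_labG, Finset.mem_filter]
    simp only [Finset.mem_univ, true_and]
    constructor
    · intro h c
      have := h (T.symm c)
      rw [T.apply_symm_apply] at this
      exact this
    · intro h c
      exact (h (T c)).trans
        (congrArg (fun p : Σ i : Fin n, Fin (lam i) => (p.2 : ℕ)) (T.symm_apply_apply c))
  rw [youngSymmetrizer, hr, hc]
  let L : tpow K V (∑ i, lam i) →ₗ[K] K :=
    { toFun := fun x => pairM B _ x y
      map_add' := fun a b => by rw [map_add, add_apply]
      map_smul' := fun a b => by rw [map_smul, smul_apply, RingHom.id_apply] }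
  have hL : ∀ x, pairM B _ x y = L x := fun _ => rfl
  rw [hL, LinearMap.sum_apply, map_sum]
  refine Finset.sum_congr rfl (fun σ _ => ?_)
  rw [LinearMap.sum_apply, map_sum]
  refine Finset.sum_congr rfl (fun τ _ => ?_)
  change L ((Equiv.Perm.sign τ : ℤ) • permAction K V _ (σ * τ) z) = _
  rw [map_zsmul, ← hL, pairM_perm]
  rfl

lemma pair_young_row (B : V →ₗ[K] V →ₗ[K] K) {n : ℕ} {lam : Fin n → ℕ}
    (T : (Σ i : Fin n, Fin (lam i)) ≃ Fin (∑ i, lam i)) (z : tpow K V (∑ i, lam i))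
    (v : Fin n → V) :
    pairM B _ (youngSymmetrizer K V lam T z) (fun c => v (rowT T c))
      = (labG (rowT T)).card * colAlt (colT T) (pairM B _ z) (fun c => v (rowT T c)) := by
  rw [pair_young, colAlt_apply, ← nsmul_eq_mul, ← Finset.sum_const]
  refine Finset.sum_congr rfl (fun σ hσ => Finset.sum_congr rfl (fun τ _ => ?_))
  rw [mem_labG] at hσ
  simp only [hσ]

lemma pair_young_sym (B : V →ₗ[K] V →ₗ[K] K) {n : ℕ} {lam : Fin n → ℕ}
    (T : (Σ i : Fin n, Fin (lam i)) ≃ Fin (∑ i, lam i)) (z : tpow K V (∑ i, lam i))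
    (σ : Equiv.Perm (Fin (∑ i, lam i))) (hσ : σ ∈ labG (rowT T)) (y : Fin (∑ i, lam i) → V) :
    pairM B _ (youngSymmetrizer K V lam T z) (fun c => y (σ c))
      = pairM B _ (youngSymmetrizer K V lam T z) y := by
  rw [pair_young, pair_young]
  refine Finset.sum_equiv (Equiv.mulLeft σ) ?_ ?_
  · intro ρ
    rw [mem_labG] at hσ
    simp [mem_labG, hσ]
  · intro ρ _
    rfl

/-- Invariant part of the Schur module. -/
noncomputable def invSub (B : V →ₗ[K] V →ₗ[K] K) {n : ℕ} (lam : Fin n → ℕ)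
    (T : (Σ i : Fin n, Fin (lam i)) ≃ Fin (∑ i, lam i)) : Submodule K (tpow K V (∑ i, lam i)) :=
  schurModule K V lam T ⊓
        ⨅ (g : V →ₗ[K] V) (_ : ∀ v w, B (g v) (g w) = B v w),
          LinearMap.eqLocus (diagAction K V (∑ i, lam i) g) LinearMap.id

lemma mem_invSub (B : V →ₗ[K] V →ₗ[K] K) {n : ℕ} (lam : Fin n → ℕ)
    (T : (Σ i : Fin n, Fin (lam i)) ≃ Fin (∑ i, lam i)) (x : tpow K V (∑ i, lam i)) :
    x ∈ invSub B lam T ↔ (∃ z, youngSymmetrizer K V lam T z = x) ∧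
      ∀ g : V →ₗ[K] V, (∀ v w, B (g v) (g w) = B v w) → diagAction K V _ g x = x := by
  simp [invSub, schurModule, Submodule.mem_iInf, LinearMap.mem_eqLocus]

/-- Standard families of vectors. -/
def IsStd (B : V →ₗ[K] V →ₗ[K] K) {n : ℕ} (star : Fin n → Fin n) (ε : Fin n → K)
    (v : Fin n → V) : Prop :=
  ∀ i j, B (v i) (v j) = if j = star i then ε i else 0

lemma std_isom [FiniteDimensional K V] (B : V →ₗ[K] V →ₗ[K] K) {n : ℕ}
    (hn : Module.finrank K V = n) (star : Fin n → Fin n) (hstar : ∀ i, star (star i) = i)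
    (ε : Fin n → K) (hε : ∀ i, ε i * ε i = 1) (e u : Fin n → V)
    (he : IsStd B star ε e) (hu : IsStd B star ε u) :
    ∃ g : V →ₗ[K] V, (∀ v w, B (g v) (g w) = B v w) ∧ ∀ i, g (e i) = u i := by
  have hli : LinearIndependent K e := by
    rw [Fintype.linearIndependent_iff]
    intro a ha i
    have h0 : B (∑ i, a i • e i) (e (star i)) = 0 := by rw [ha]; simp
    rw [map_sum, LinearMap.sum_apply, Finset.sum_eq_single i] at h0
    · rw [map_smul, LinearMap.smul_apply, he, if_pos rfl, smul_eq_mul] at h0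
      refine (mul_eq_zero.1 h0).resolve_right (fun h => ?_)
      have := hε i
      rw [h] at this
      simp at this
    · intro j _ hj
      rw [map_smul, LinearMap.smul_apply, he, if_neg, smul_zero]
      intro h
      apply hj
      rw [← hstar j, ← h, hstar]
    · simp
  let b := basisOfLinearIndependentOfCardEqFinrank' e hli (by simp [hn])
  have hb : ∀ i, b i = e i := by
    intro i
    simp [b]
  refine ⟨b.constr K u, ?_, ?_⟩
  · intro v w
    have : B.compl₁₂ (b.constr K u) (b.constr K u) = B := by
      refine b.ext (fun i => b.ext (fun j => ?_))
      simp only [LinearMap.compl₁₂_apply, Module.Basis.constr_basis]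
      rw [hb, hb, hu, he]
    exact LinearMap.congr_fun (LinearMap.congr_fun this v) w
  · intro i
    rw [← hb i, Module.Basis.constr_basis]

/-- The vanishing criterion used for both types of forms. -/
def VanCrit (B : V →ₗ[K] V →ₗ[K] K) {n : ℕ} (star : Fin n → Fin n) (ε : Fin n → K) : Prop :=
  ∀ (lam : Fin n → ℕ) (F : (Fin n → V) → K),
    (∀ v i j (c : K), i < j → F (Function.update v j (v j + c • v i)) = F v) →
    (∀ v j (c : K), F (Function.update v j (c • v j)) = c ^ lam j * F v) →
    (∀ v w, ∃ p : Polynomial K, ∀ t, p.eval t = F (v + t • w)) →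
    (∀ v, IsStd B star ε v → F v = 0) → ∀ v, F v = 0

lemma exists_std (B : V →ₗ[K] V →ₗ[K] K) {n : ℕ} (star : Fin n → Fin n) (ε : Fin n → K)
    (hv : VanCrit B star ε) : ∃ e, IsStd B star ε e := by
  by_contra hcon
  push Not at hcon
  have := hv (fun _ => 0) (fun _ => 1) (by simp) (by simp) (fun _ _ => ⟨1, by simp⟩)
    (fun v hv => absurd hv (hcon v)) 0
  exact one_ne_zero this

lemma inv_std [FiniteDimensional K V] (B : V →ₗ[K] V →ₗ[K] K) {n : ℕ}
    (hn : Module.finrank K V = n) (star : Fin n → Fin n) (hstar : ∀ i, star (star i) = i)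
    (ε : Fin n → K) (hε : ∀ i, ε i * ε i = 1) (e u : Fin n → V)
    (he : IsStd B star ε e) (hu : IsStd B star ε u) {lam : Fin n → ℕ}
    (T : (Σ i : Fin n, Fin (lam i)) ≃ Fin (∑ i, lam i)) (x : tpow K V (∑ i, lam i))
    (hx : x ∈ invSub B lam T) :
    pairM B _ x (fun c => u (rowT T c)) = pairM B _ x (fun c => e (rowT T c)) := by
  obtain ⟨g, hg, hge⟩ := std_isom B hn star hstar ε hε e u he hu
  rw [← pairM_diag B g hg x (fun c => e (rowT T c)), ((mem_invSub B lam T x).1 hx).2 g hg]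
  simp only [hge]

lemma schurInv_inj [CharZero K] [FiniteDimensional K V] (B : V →ₗ[K] V →ₗ[K] K) {n : ℕ}
    (hBnd : ∀ v, (∀ w, B v w = 0) → v = 0)
    (hn : Module.finrank K V = n) (star : Fin n → Fin n) (hstar : ∀ i, star (star i) = i)
    (ε : Fin n → K) (hε : ∀ i, ε i * ε i = 1) (hvan : VanCrit B star ε) (e : Fin n → V)
    (he : IsStd B star ε e) {lam : Fin n → ℕ} (hlam : Antitone lam)
    (T : (Σ i : Fin n, Fin (lam i)) ≃ Fin (∑ i, lam i)) (x : tpow K V (∑ i, lam i))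
    (hx : x ∈ invSub B lam T) (h0 : pairM B _ x (fun c => e (rowT T c)) = 0) : x = 0 := by
  obtain ⟨z, hz⟩ := ((mem_invSub B lam T x).1 hx).1
  apply pairM_inj B hBnd
  apply multi_polar (rowT T)
  · intro σ hσ y
    rw [← hz]
    exact pair_young_sym B T z σ hσ y
  · apply hvan lam (fun v => pairM B _ x (fun c => v (rowT T c)))
    · intro v i j c hij
      rw [← hz, pair_young_row, pair_young_row, colAlt_unip (rowT T) (colT T) _ v i j hij.ne]
      intro c hc
      have hlt := colT_lt T c
      rw [hc] at hlt
      exact ⟨T ⟨i, ⟨colT T c, hlt.trans_le (hlam hij.le)⟩⟩, rowT_mk T _ _, colT_mk T _ _⟩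
    · intro v j c
      rw [multi_scale, card_row]
    · intro v w
      exact multi_poly _ _ v w
    · intro v hv
      rw [inv_std B hn star hstar ε hε e v he hv T x hx, h0]

lemma inv_weight [FiniteDimensional K V] (B : V →ₗ[K] V →ₗ[K] K) {n : ℕ}
    (hn : Module.finrank K V = n) (star : Fin n → Fin n) (hstar : ∀ i, star (star i) = i)
    (ε : Fin n → K) (hε : ∀ i, ε i * ε i = 1) (e : Fin n → V)
    (he : IsStd B star ε e) {lam : Fin n → ℕ}
    (T : (Σ i : Fin n, Fin (lam i)) ≃ Fin (∑ i, lam i)) (x : tpow K V (∑ i, lam i))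
    (hx : x ∈ invSub B lam T) (h0 : pairM B _ x (fun c => e (rowT T c)) ≠ 0)
    (s : Fin n → K) (hs : ∀ i, s i * s (star i) = 1) : ∏ i, s i ^ lam i = 1 := by
  have hu : IsStd B star ε (fun i => s i • e i) := by
    intro i j
    simp only [map_smul, LinearMap.smul_apply, smul_eq_mul]
    rw [he]
    split_ifs with h
    · subst h
      linear_combination ε i * hs i
    · simp
  have := inv_std B hn star hstar ε hε e _ he hu T x hx
  rw [MultilinearMap.map_smul_univ (pairM B _ x) (fun c => s (rowT T c))
    (fun c => e (rowT T c)), prod_row, smul_eq_mul] at this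
  exact mul_right_cancel₀ h0 (by rw [this, one_mul])

lemma finrank_inv_one [CharZero K] [FiniteDimensional K V] (B : V →ₗ[K] V →ₗ[K] K) {n : ℕ}
    (hBnd : ∀ v, (∀ w, B v w = 0) → v = 0)
    (hn : Module.finrank K V = n) (star : Fin n → Fin n) (hstar : ∀ i, star (star i) = i)
    (ε : Fin n → K) (hε : ∀ i, ε i * ε i = 1) (hvan : VanCrit B star ε) (e : Fin n → V)
    (he : IsStd B star ε e) {lam : Fin n → ℕ} (hlam : Antitone lam)
    (T : (Σ i : Fin n, Fin (lam i)) ≃ Fin (∑ i, lam i)) (x : tpow K V (∑ i, lam i))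
    (hx : x ∈ invSub B lam T) (h0 : pairM B _ x (fun c => e (rowT T c)) ≠ 0) :
    Module.finrank K (invSub B lam T) = 1 := by
  refine finrank_eq_one_iff'.2 ⟨⟨x, hx⟩, ?_, ?_⟩
  · intro h
    apply h0
    have : x = 0 := congrArg Subtype.val h
    rw [this]
    simp
  · rintro ⟨w, hw⟩
    refine ⟨pairM B _ w (fun c => e (rowT T c)) * (pairM B _ x (fun c => e (rowT T c)))⁻¹, ?_⟩
    apply Subtype.ext
    refine sub_eq_zero.1 (schurInv_inj B hBnd hn star hstar ε hε hvan e he hlam T _ ?_ ?_)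
    · exact Submodule.sub_mem _ (Submodule.smul_mem _ _ hx) hw
    · change pairM B _ ((_ * _⁻¹) • x - w) _ = 0
      rw [map_sub, map_smul, sub_apply, smul_apply, smul_eq_mul, mul_assoc, inv_mul_cancel₀ h0]
      ring

lemma finrank_inv_zero [CharZero K] [FiniteDimensional K V] (B : V →ₗ[K] V →ₗ[K] K) {n : ℕ}
    (hBnd : ∀ v, (∀ w, B v w = 0) → v = 0)
    (hn : Module.finrank K V = n) (star : Fin n → Fin n) (hstar : ∀ i, star (star i) = i)
    (ε : Fin n → K) (hε : ∀ i, ε i * ε i = 1) (hvan : VanCrit B star ε) (e : Fin n → V)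
    (he : IsStd B star ε e) {lam : Fin n → ℕ} (hlam : Antitone lam)
    (T : (Σ i : Fin n, Fin (lam i)) ≃ Fin (∑ i, lam i))
    (h0 : ∀ x ∈ invSub B lam T, pairM B _ x (fun c => e (rowT T c)) = 0) :
    Module.finrank K (invSub B lam T) = 0 := by
  have : invSub B lam T = ⊥ := by
    rw [eq_bot_iff]
    intro x hx
    exact (Submodule.mem_bot K).2
      (schurInv_inj B hBnd hn star hstar ε hε hvan e he hlam T x hx (h0 x hx))
  rw [this, finrank_bot]

end Core

section Exist

variable {K V : Type*} [Field K] [AddCommGroup V] [Module K V]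

lemma sign_pairs {A : Type*} [Fintype A] (τ : Equiv.Perm (A × Bool))
    (h : ∀ a, τ (a, true) = ((τ (a, false)).1, !(τ (a, false)).2)) :
    (Equiv.Perm.sign τ : ℤ) = ∏ a, if (τ (a, false)).2 then (-1 : ℤ) else 1 := by
  have hinj : Function.Injective (fun a => (τ (a, false)).1) := by
    intro a a' haa
    dsimp only at haa
    by_cases hb : (τ (a, false)).2 = (τ (a', false)).2
    · have := τ.injective (Prod.ext haa hb)
      exact congrArg Prod.fst this
    · have h2 : τ (a, true) = τ (a', false) := by
        rw [h a]
        refine Prod.ext haa ?_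
        dsimp only
        revert hb
        cases (τ (a, false)).2 <;> cases (τ (a', false)).2 <;> simp
      have := congrArg Prod.snd (τ.injective h2)
      simp at this
  let π : Equiv.Perm A := Equiv.ofBijective _ ⟨hinj, Finite.injective_iff_surjective.1 hinj⟩
  have hτ : τ = Equiv.prodCongrLeft (fun _ : Bool => π) *
      Equiv.prodCongrRight (fun a => if (τ (a, false)).2 then Equiv.swap false true else 1) := by
    ext ⟨a, b⟩ : 1
    rw [Equiv.Perm.mul_apply]
    cases b
    · refine Prod.ext rfl ?_
      simp only [Equiv.prodCongrRight_apply, Equiv.prodCongrLeft_apply]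
      split_ifs with hh <;> simp [hh]
    · rw [h a]
      refine Prod.ext rfl ?_
      simp only [Equiv.prodCongrRight_apply, Equiv.prodCongrLeft_apply]
      split_ifs with hh <;> simp [hh]
  conv_lhs => rw [hτ]
  rw [Equiv.Perm.sign_mul, Equiv.Perm.sign_prodCongrLeft, Equiv.Perm.sign_prodCongrRight]
  simp only [Fintype.prod_bool, Int.units_mul_self, one_mul, Units.coe_prod]
  refine Finset.prod_congr rfl (fun a _ => ?_)
  split_ifs <;> simp

/-- The multilinear form pairing the factors according to E. -/
noncomputable def pairForm (B : V →ₗ[K] V →ₗ[K] K) {A : Type*} [Fintype A] {d : ℕ}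
    (E : A × Bool ≃ Fin d) : MultilinearMap K (fun _ : Fin d => V) K where
  toFun y := ∏ a, B (y (E (a, false))) (y (E (a, true)))
  map_update_add' := by
    intro inst y c u v
    obtain rfl : inst = fun a b => instDecidableEqFin d a b := Subsingleton.elim _ _
    obtain ⟨⟨a, b⟩, rfl⟩ := E.surjective c
    rw [Fintype.prod_eq_mul_prod_compl a, Fintype.prod_eq_mul_prod_compl a,
      Fintype.prod_eq_mul_prod_compl a]
    have : ∀ w, ∏ i ∈ ({a} : Finset A)ᶜ, B (Function.update y (E (a, b)) w (E (i, false)))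
        (Function.update y (E (a, b)) w (E (i, true)))
        = ∏ i ∈ ({a} : Finset A)ᶜ, B (y (E (i, false))) (y (E (i, true))) := by
      intro w
      refine Finset.prod_congr rfl (fun i hi => ?_)
      simp only [Finset.mem_compl, Finset.mem_singleton] at hi
      simp [Function.update_apply, hi]
    rw [this, this, this, ← add_mul]
    congr 1
    cases b <;> simp [Function.update_apply]
  map_update_smul' := by
    intro inst y c r u
    obtain rfl : inst = fun a b => instDecidableEqFin d a b := Subsingleton.elim _ _
    obtain ⟨⟨a, b⟩, rfl⟩ := E.surjective c
    rw [Fintype.prod_eq_mul_prod_compl a, Fintype.prod_eq_mul_prod_compl a]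
    have : ∀ w, ∏ i ∈ ({a} : Finset A)ᶜ, B (Function.update y (E (a, b)) w (E (i, false)))
        (Function.update y (E (a, b)) w (E (i, true)))
        = ∏ i ∈ ({a} : Finset A)ᶜ, B (y (E (i, false))) (y (E (i, true))) := by
      intro w
      refine Finset.prod_congr rfl (fun i hi => ?_)
      simp only [Finset.mem_compl, Finset.mem_singleton] at hi
      simp [Function.update_apply, hi]
    rw [this, this, smul_eq_mul, ← mul_assoc]
    congr 1
    cases b <;> simp [Function.update_apply]

lemma pairForm_apply (B : V →ₗ[K] V →ₗ[K] K) {A : Type*} [Fintype A] {d : ℕ}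
    (E : A × Bool ≃ Fin d) (y : Fin d → V) :
    pairForm B E y = ∏ a, B (y (E (a, false))) (y (E (a, true))) := rfl

lemma exists_inv [CharZero K] [FiniteDimensional K V] (B : V →ₗ[K] V →ₗ[K] K) {n : ℕ}
    (hBnd : ∀ v, (∀ w, B v w = 0) → v = 0) (star : Fin n → Fin n)
    (ε : Fin n → K) (e : Fin n → V)
    (he : IsStd B star ε e) {lam : Fin n → ℕ}
    (T : (Σ i : Fin n, Fin (lam i)) ≃ Fin (∑ i, lam i))
    {A : Type*} [Fintype A] (E : A × Bool ≃ Fin (∑ i, lam i))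
    (h1 : ∀ a, rowT T (E (a, true)) = star (rowT T (E (a, false))))
    (h2 : ∀ a p q, colT T (E p) = colT T (E (a, false)) → colT T (E q) = colT T (E (a, true)) →
      rowT T (E q) = star (rowT T (E p)) →
      q = (p.1, !p.2) ∧ ε (rowT T (E p)) = if p.2 then -1 else 1) :
    ∃ x ∈ invSub B lam T, pairM B _ x (fun c => e (rowT T c)) ≠ 0 := by
  obtain ⟨z, hz⟩ := pairM_surj B hBnd (pairForm B E)
  refine ⟨youngSymmetrizer K V lam T z, (mem_invSub B lam T _).2 ⟨⟨z, rfl⟩, ?_⟩, ?_⟩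
  · intro g hg
    have hinj : Function.Injective g := by
      rw [injective_iff_map_eq_zero]
      intro v hv
      apply hBnd
      intro w
      rw [← hg, hv]
      simp
    have hsurj : Function.Surjective g := LinearMap.injective_iff_surjective.1 hinj
    refine sub_eq_zero.1 (pairM_inj B hBnd _ (fun y => ?_))
    choose y' hy' using fun c => hsurj (y c)
    obtain rfl : (fun c => g (y' c)) = y := funext hy'
    rw [map_sub, sub_apply, pairM_diag B g hg, pair_young, pair_young, sub_eq_zero]
    refine Finset.sum_congr rfl (fun σ _ => Finset.sum_congr rfl (fun τ _ => ?_))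
    rw [hz, pairForm_apply, pairForm_apply]
    simp only [hg]
  · rw [pair_young_row, colAlt_apply, hz]
    have hterm : ∀ τ ∈ labG (colT T), (Equiv.Perm.sign τ : ℤ) •
        pairForm B E (fun c => e (rowT T (τ c)))
        = if ∀ a, rowT T (τ (E (a, true))) = star (rowT T (τ (E (a, false)))) then (1 : K)
          else 0 := by
      intro τ hτ
      rw [mem_labG] at hτ
      rw [pairForm_apply]
      split_ifs with hc
      · have key : ∀ a, E.symm (τ (E (a, true))) = ((E.symm (τ (E (a, false)))).1,
            !(E.symm (τ (E (a, false)))).2) ∧ ε (rowT T (τ (E (a, false))))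
              = if (E.symm (τ (E (a, false)))).2 then -1 else 1 := by
          intro a
          have := h2 a (E.symm (τ (E (a, false)))) (E.symm (τ (E (a, true))))
          simp only [E.apply_symm_apply] at this
          exact this (hτ _) (hτ _) (hc a)
        have hs := sign_pairs (E.symm.permCongr τ) (fun a => by
          simpa [Equiv.permCongr_apply] using (key a).1)
        rw [Equiv.Perm.sign_permCongr] at hs
        have hp : ∏ a, B (e (rowT T (τ (E (a, false))))) (e (rowT T (τ (E (a, true)))))
            = ((Equiv.Perm.sign τ : ℤ) : K) := by
          rw [hs, Int.cast_prod]
          refine Finset.prod_congr rfl (fun a _ => ?_)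
          rw [he, if_pos (hc a), (key a).2]
          rw [show (E.symm.permCongr τ) (a, false) = E.symm (τ (E (a, false))) from rfl,
            apply_ite (Int.cast : ℤ → K), Int.cast_neg, Int.cast_one]
        rw [hp, zsmul_eq_mul, ← Int.cast_mul, ← Units.val_mul, Int.units_mul_self]
        simp
      · push Not at hc
        obtain ⟨a, ha⟩ := hc
        rw [Finset.prod_eq_zero (Finset.mem_univ a), smul_zero]
        rw [he, if_neg ha]
    rw [Finset.sum_congr rfl hterm, Finset.sum_boole]
    refine mul_ne_zero ?_ ?_
    · rw [Nat.cast_ne_zero]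
      refine Finset.card_ne_zero_of_mem (a := 1) ?_
      simp [mem_labG]
    · rw [Nat.cast_ne_zero]
      refine Finset.card_ne_zero_of_mem (a := 1) ?_
      simp [mem_labG, h1]

lemma orth_exists [CharZero K] [FiniteDimensional K V] (B : V →ₗ[K] V →ₗ[K] K) {n : ℕ}
    (hBnd : ∀ v, (∀ w, B v w = 0) → v = 0) (e : Fin n → V)
    (he : IsStd B id (fun _ => 1) e) {lam : Fin n → ℕ}
    (T : (Σ i : Fin n, Fin (lam i)) ≃ Fin (∑ i, lam i)) (hev : ∀ i, Even (lam i)) :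
    ∃ x ∈ invSub B lam T, pairM B _ x (fun c => e (rowT T c)) ≠ 0 := by
  let f : (Σ i : Fin n, Fin (lam i / 2)) × Bool → Fin (∑ i, lam i) := fun p =>
    T ⟨p.1.1, ⟨2 * p.1.2.val + p.2.toNat, by
      have h := p.1.2.isLt
      obtain ⟨k, hk⟩ := hev p.1.1
      have := p.2.toNat_le
      omega⟩⟩
  have hrow : ∀ p, rowT T (f p) = p.1.1 := fun p => rowT_mk T _ _
  have hcol : ∀ p, colT T (f p) = 2 * p.1.2.val + p.2.toNat := fun p => colT_mk T _ _
  have hfi : Function.Injective f := by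
    intro p q hpq
    have h1 := hrow p
    have h2 := hcol p
    rw [hpq, hrow] at h1
    rw [hpq, hcol] at h2
    obtain ⟨⟨i, l⟩, b⟩ := p
    obtain ⟨⟨j, k⟩, b'⟩ := q
    dsimp only at h1 h2
    subst h1
    cases b <;> cases b' <;> simp only [Bool.toNat_true, Bool.toNat_false] at h2
    · rw [show k = l from Fin.ext (by omega)]
    · omega
    · omega
    · rw [show k = l from Fin.ext (by omega)]
  have hfs : Function.Surjective f := by
    intro c
    have hlt := colT_lt T c
    obtain ⟨k, hk⟩ := hev (rowT T c)
    refine ⟨(⟨rowT T c, ⟨colT T c / 2, by omega⟩⟩, decide (colT T c % 2 = 1)), ?_⟩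
    apply box_ext T
    · rw [hrow]
    · rw [hcol]
      dsimp only
      by_cases h : colT T c % 2 = 1
      · simp only [h, decide_true, Bool.toNat_true]
        omega
      · simp only [h, decide_false, Bool.toNat_false]
        omega
  obtain ⟨E, hE⟩ : ∃ E : (Σ i : Fin n, Fin (lam i / 2)) × Bool ≃ Fin (∑ i, lam i),
    ∀ p, E p = f p := ⟨Equiv.ofBijective f ⟨hfi, hfs⟩, fun _ => rfl⟩
  refine exists_inv B hBnd id (fun _ => 1) e he T E ?_ ?_
  · intro a
    simp only [hE, id]
    rw [hrow, hrow]
  · intro a p q hp hq hr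
    simp only [hE, id] at hp hq hr ⊢
    rw [hcol, hcol] at hp hq
    rw [hrow, hrow] at hr
    obtain ⟨⟨i, l⟩, b⟩ := p
    obtain ⟨⟨j, k⟩, b'⟩ := q
    dsimp only at hp hq hr ⊢
    subst hr
    cases b <;> cases b' <;> simp only [Bool.toNat_true, Bool.toNat_false] at hp hq
    · omega
    · rw [show k = l from Fin.ext (by omega)]
      simp
    · omega
    · omega

lemma symp_exists [CharZero K] [FiniteDimensional K V] (B : V →ₗ[K] V →ₗ[K] K) {m : ℕ}
    (hBnd : ∀ v, (∀ w, B v w = 0) → v = 0) (e : Fin (2 * m) → V)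
    (he : IsStd B sstar (seps K) e) {lam : Fin (2 * m) → ℕ}
    (T : (Σ i : Fin (2 * m), Fin (lam i)) ≃ Fin (∑ i, lam i))
    (hev : ∀ i, lam (sstar i) = lam i) :
    ∃ x ∈ invSub B lam T, pairM B _ x (fun c => e (rowT T c)) ≠ 0 := by
  let r : Fin m → Bool → Fin (2 * m) := fun i b => ⟨2 * i.val + b.toNat, by
    have := i.isLt
    have := b.toNat_le
    omega⟩
  have hr0 : ∀ i, sstar (r i false) = r i true := by
    intro i
    apply Fin.ext
    rw [sstar_val]
    simp [r]
  have hrl : ∀ i b, lam (r i b) = lam (r i false) := by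
    intro i b
    cases b
    · rfl
    · rw [← hr0, hev]
  let f : (Σ i : Fin m, Fin (lam (r i false))) × Bool → Fin (∑ i, lam i) := fun p =>
    T ⟨r p.1.1 p.2, ⟨p.1.2.val, p.1.2.isLt.trans_eq (hrl _ _).symm⟩⟩
  have hrow : ∀ p, rowT T (f p) = r p.1.1 p.2 := fun p => rowT_mk T _ _
  have hcol : ∀ p, colT T (f p) = p.1.2.val := fun p => colT_mk T _ _
  have hrinj : ∀ i b j b', r i b = r j b' → i = j ∧ b = b' := by
    intro i b j b' h
    have := congrArg Fin.val h
    simp only [r] at this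
    cases b <;> cases b' <;> simp only [Bool.toNat_true, Bool.toNat_false] at this <;>
      first
      | omega
      | exact ⟨Fin.ext (by omega), rfl⟩
  have hfi : Function.Injective f := by
    intro p q hpq
    have h1 := hrow p
    have h2 := hcol p
    rw [hpq, hrow] at h1
    rw [hpq, hcol] at h2
    obtain ⟨⟨i, l⟩, b⟩ := p
    obtain ⟨⟨j, k⟩, b'⟩ := q
    dsimp only at h1 h2
    obtain ⟨rfl, rfl⟩ := hrinj _ _ _ _ h1
    rw [show k = l from Fin.ext (by omega)]
  have hfs : Function.Surjective f := by
    intro c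
    have hlt := colT_lt T c
    have hrr : ∃ i b, rowT T c = r i b := by
      have := (rowT T c).isLt
      refine ⟨⟨(rowT T c).val / 2, by omega⟩, decide ((rowT T c).val % 2 = 1), ?_⟩
      apply Fin.ext
      simp only [r]
      by_cases h : (rowT T c).val % 2 = 1
      · simp only [h, decide_true, Bool.toNat_true]
        omega
      · simp only [h, decide_false, Bool.toNat_false]
        omega
    obtain ⟨i, b, hib⟩ := hrr
    rw [hib, hrl] at hlt
    refine ⟨(⟨i, ⟨colT T c, hlt⟩⟩, b), ?_⟩
    apply box_ext T
    · rw [hrow, hib]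
    · rw [hcol]
  obtain ⟨E, hE⟩ : ∃ E : (Σ i : Fin m, Fin (lam (r i false))) × Bool ≃ Fin (∑ i, lam i),
    ∀ p, E p = f p := ⟨Equiv.ofBijective f ⟨hfi, hfs⟩, fun _ => rfl⟩
  refine exists_inv B hBnd sstar (seps K) e he T E ?_ ?_
  · intro a
    simp only [hE]
    rw [hrow, hrow, hr0]
  · intro a p q hp hq hr
    simp only [hE] at hp hq hr ⊢
    rw [hcol, hcol] at hp hq
    rw [hrow, hrow] at hr
    rw [hrow]
    obtain ⟨⟨i, l⟩, b⟩ := p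
    obtain ⟨⟨j, k⟩, b'⟩ := q
    dsimp only at hp hq hr ⊢
    have hrn : sstar (r i b) = r i (!b) := by
      cases b
      · exact hr0 i
      · rw [← hr0, sstar_sstar]
        rfl
    rw [hrn] at hr
    obtain ⟨rfl, rfl⟩ := hrinj _ _ _ _ hr
    rw [show k = l from Fin.ext (by omega)]
    refine ⟨rfl, ?_⟩
    unfold seps
    cases b
    · simp [r]
    · simp [r, Nat.add_mod]

lemma even_cols {m : ℕ} (mu : Fin (2 * m) → ℕ) (hmu : Antitone mu) :
    (∀ j : ℕ, Even ((Finset.univ.filter (fun i : Fin (2 * m) => j < mu i)).card)) ↔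
      ∀ i, mu (sstar i) = mu i := by
  constructor
  · intro h
    have key : ∀ i : Fin (2 * m), i.val % 2 = 0 → mu (sstar i) = mu i := by
      intro i hi
      have hsv : (sstar i).val = i.val + 1 := by rw [sstar_val, if_pos hi]
      by_contra hne
      have hlt : mu (sstar i) < mu i :=
        lt_of_le_of_ne (hmu (Fin.le_def.2 (by omega))) hne
      have := h (mu (sstar i))
      have hf : Finset.univ.filter (fun i' : Fin (2 * m) => mu (sstar i) < mu i')
          = Finset.Iic i := by
        ext k
        simp only [Finset.mem_filter, Finset.mem_univ, true_and, Finset.mem_Iic]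
        constructor
        · intro hk
          by_contra hki
          have : sstar i ≤ k := by
            rw [Fin.le_def] at hki ⊢
            omega
          exact absurd (hmu this) (by omega)
        · intro hk
          exact lt_of_lt_of_le hlt (hmu hk)
      rw [hf, Fin.card_Iic] at this
      obtain ⟨t, ht⟩ := this
      omega
    intro i
    by_cases hi : i.val % 2 = 0
    · exact key i hi
    · have hs : (sstar i).val % 2 = 0 := by
        rw [sstar_val, if_neg hi]
        omega
      have := key _ hs
      rw [sstar_sstar] at this
      exact this.symm
  · intro h j
    have : ∑ i ∈ Finset.univ.filter (fun i : Fin (2 * m) => j < mu i), (1 : ZMod 2) = 0 := by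
      refine Finset.sum_involution (fun i _ => sstar i) ?_ ?_ ?_ ?_
      · intro i _
        decide
      · intro i _ _ hh
        have := congrArg Fin.val hh
        rw [sstar_val] at this
        split_ifs at this <;> omega
      · intro i hi
        simpa [h] using hi
      · intro i _
        exact sstar_sstar i
    rw [Finset.sum_const, nsmul_eq_mul, mul_one] at this
    exact (ZMod.natCast_eq_zero_iff_even).1 this

lemma orth_parity [CharZero K] [FiniteDimensional K V] (B : V →ₗ[K] V →ₗ[K] K) {n : ℕ}
    (hn : Module.finrank K V = n) (e : Fin n → V)
    (he : IsStd B id (fun _ => 1) e) {lam : Fin n → ℕ}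
    (T : (Σ i : Fin n, Fin (lam i)) ≃ Fin (∑ i, lam i)) (x : tpow K V (∑ i, lam i))
    (hx : x ∈ invSub B lam T) (h0 : pairM B _ x (fun c => e (rowT T c)) ≠ 0) (i : Fin n) :
    Even (lam i) := by
  have := inv_weight B hn id (fun _ => rfl) (fun _ => 1) (by simp) e he T x hx h0
    (fun j => if j = i then -1 else 1) (fun j => by simp only [id]; split_ifs <;> simp)
  rw [Finset.prod_eq_single i (fun j _ hj => by simp [hj]) (by simp), if_pos rfl] at this
  by_contra hodd
  rw [Nat.not_even_iff_odd] at hodd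
  rw [hodd.neg_one_pow] at this
  norm_num at this

lemma symp_parity [CharZero K] [FiniteDimensional K V] (B : V →ₗ[K] V →ₗ[K] K) {m : ℕ}
    (hn : Module.finrank K V = 2 * m) (e : Fin (2 * m) → V)
    (he : IsStd B sstar (seps K) e) {lam : Fin (2 * m) → ℕ}
    (T : (Σ i : Fin (2 * m), Fin (lam i)) ≃ Fin (∑ i, lam i)) (x : tpow K V (∑ i, lam i))
    (hx : x ∈ invSub B lam T) (h0 : pairM B _ x (fun c => e (rowT T c)) ≠ 0)
    (i : Fin (2 * m)) : lam (sstar i) = lam i := by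
  have hne : ∀ j : Fin (2 * m), sstar j ≠ j := by
    intro j hh
    have := congrArg Fin.val hh
    rw [sstar_val] at this
    split_ifs at this <;> omega
  have h2 : (2 : K) ≠ 0 := two_ne_zero
  have := inv_weight B hn sstar sstar_sstar (seps K) seps_mul e he T x hx h0
    (fun j => if j = i then 2 else if j = sstar i then 2⁻¹ else 1) (fun j => by
      by_cases h : j = i
      · subst h
        simp [hne]
      · by_cases h' : j = sstar i
        · subst h'
          simp [hne, sstar_sstar]
        · have h3 : sstar j ≠ i := fun hh => h' (by rw [← hh, sstar_sstar])
          have h4 : sstar j ≠ sstar i := fun hh => h (by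
            rw [← sstar_sstar j, hh, sstar_sstar])
          simp [h, h', h3, h4])
  rw [Finset.prod_eq_mul i (sstar i) (hne i).symm (fun j _ hj => by simp [hj.1, hj.2])
    (by simp) (by simp), if_pos rfl, if_neg (hne i), if_pos rfl, inv_pow,
    mul_inv_eq_one₀ (pow_ne_zero _ h2)] at this
  have h3 : (2 : ℕ) ^ lam i = 2 ^ lam (sstar i) := by exact_mod_cast this
  exact (Nat.pow_right_injective le_rfl h3).symm

end Exist

/-- Let V be an orthogonal space of dimension n (B a nondegenerate symmetric
bilinear form) and W a symplectic space of dimension 2m (C a nondegenerate alternating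
form), over an algebraically closed field of characteristic 0.  Then the space of
O(V)-invariants in S_lam V is 1-dimensional if lam = 2μ (all parts even) and 0 otherwise;
and the space of Sp(W)-invariants in S_mu W is 1-dimensional if mu has even columns and 0
otherwise. -/
theorem stmt10 {K : Type*} [Field K] [IsAlgClosed K] [CharZero K]
    (V W : Type*) [AddCommGroup V] [Module K V] [FiniteDimensional K V]
    [AddCommGroup W] [Module K W] [FiniteDimensional K W]
    {n m : ℕ} (hnV : Module.finrank K V = n) (hnW : Module.finrank K W = 2 * m)
    (B : V →ₗ[K] V →ₗ[K] K) (hBsymm : ∀ v w, B v w = B w v)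
    (hBnd : ∀ v, (∀ w, B v w = 0) → v = 0)
    (C : W →ₗ[K] W →ₗ[K] K) (hCalt : ∀ w, C w w = 0)
    (hCnd : ∀ v, (∀ w, C v w = 0) → v = 0)
    (lam : Fin n → ℕ) (hlam : Antitone lam)
    (mu : Fin (2 * m) → ℕ) (hmu : Antitone mu)
    (T : (Σ i : Fin n, Fin (lam i)) ≃ Fin (∑ i, lam i))
    (S : (Σ i : Fin (2 * m), Fin (mu i)) ≃ Fin (∑ i, mu i)) :
    Module.finrank K ↥(schurModule K V lam T ⊓
        ⨅ (g : V →ₗ[K] V) (_ : ∀ v w, B (g v) (g w) = B v w),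
          LinearMap.eqLocus (diagAction K V (∑ i, lam i) g) LinearMap.id)
      = (if ∀ i, Even (lam i) then 1 else 0) ∧
    Module.finrank K ↥(schurModule K W mu S ⊓
        ⨅ (g : W →ₗ[K] W) (_ : ∀ v w, C (g v) (g w) = C v w),
          LinearMap.eqLocus (diagAction K W (∑ i, mu i) g) LinearMap.id)
      = (if ∀ j : ℕ, Even ((Finset.univ.filter (fun i : Fin (2 * m) => j < mu i)).card)
          then 1 else 0) := by
  constructor
  · change Module.finrank K (invSub B lam T) = _
    have hvan : VanCrit B (id : Fin n → Fin n) (fun _ => 1) := by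
      intro lam F h1 h2 h3 h4
      refine orth_vanish hnV B hBsymm hBnd lam F h1 h2 h3 (fun v hv => h4 v ?_)
      intro i j
      rw [hv]
      simp only [id, eq_comm]
    obtain ⟨e, he⟩ := exists_std B _ _ hvan
    split_ifs with hev
    · obtain ⟨x, hx, h0⟩ := orth_exists B hBnd e he T hev
      exact finrank_inv_one B hBnd hnV id (fun _ => rfl) _ (by simp) hvan e he hlam T x hx h0
    · refine finrank_inv_zero B hBnd hnV id (fun _ => rfl) _ (by simp) hvan e he hlam T ?_
      intro x hx
      by_contra h0
      exact hev (orth_parity B hnV e he T x hx h0)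
  · change Module.finrank K (invSub C mu S) = _
    have hvan : VanCrit C (sstar (m := m)) (seps K) := by
      intro lam F h1 h2 h3 h4
      exact symp_vanish hnW C hCalt hCnd lam F h1 h2 h3 h4
    obtain ⟨e, he⟩ := exists_std C _ _ hvan
    split_ifs with hev
    · obtain ⟨x, hx, h0⟩ := symp_exists C hCnd e he S ((even_cols mu hmu).1 hev)
      exact finrank_inv_one C hCnd hnW sstar sstar_sstar _ seps_mul hvan e he hmu S x hx h0
    · refine finrank_inv_zero C hCnd hnW sstar sstar_sstar _ seps_mul hvan e he hmu S ?_
      intro x hx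
      by_contra h0
      exact hev ((even_cols mu hmu).2 (symp_parity C hnW e he S x hx h0))
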